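/- Let D = [0, 2π] × [0, π/2]. Let λ : D × [0, ∞) → [0, ∞) (drone density), l : [0, ∞) → [0, ∞) (path loss), and g : D → [0, ∞) (ground-station antenna gain) be continuous functions, let P > 0 (average unwanted emission power), and let a ∈ ℝ. Define the volume functional J(r) = ∫∫_D (∫_0^{r(φ,θ)} ρ²·sin θ dρ) dφ dθ and the interference-reduction functional K(r) = ∫∫_D (∫_0^{r(φ,θ)} P·λ(φ,θ,ρ)·l(ρ)·g(φ,θ)·ρ²·sin θ dρ) dφ dθ, both on the space of continuous functions r : D → (0, ∞) with the sup norm. Suppose r* : D → (0, ∞) is continuous, satisfies K(r*) = a, is a local minimizer of J among continuous positive functions r satisfying K(r) = a, and suppose there exists a smooth function η₀ compactly supported in the open rectangle (0, 2π) × (0, π/2) with ∫∫_D P·λ(φ,θ,r*(φ,θ))·l(r*(φ,θ))·g(φ,θ)·r*(φ,θ)²·sin θ·η₀(φ,θ) dφ dθ ≠ 0. Then there exists a real constant μ such that P·λ(φ, θ, r*(φ, θ))·l(r*(φ, θ))·g(φ, θ) = μ for all (φ, θ) ∈ (0, 2π) × (0, π/2). -/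

import Mathlib

open MeasureTheory Real intervalIntegral

/-- The parameter domain `D = [0, 2π] × [0, π/2]` (azimuth × elevation). -/
def NFZDomain : Set (ℝ × ℝ) :=
  Set.Icc (0 : ℝ) (2 * Real.pi) ×ˢ Set.Icc (0 : ℝ) (Real.pi / 2)

/-- The volume functional `J(r) = ∫∫_D ∫_0^{r(φ,θ)} ρ² sin θ dρ dθ dφ` of the no-fly zone. -/
noncomputable def volJ (r : ℝ × ℝ → ℝ) : ℝ :=
  ∫ φ in (0 : ℝ)..(2 * Real.pi), ∫ θ in (0 : ℝ)..(Real.pi / 2),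
    ∫ ρ in (0 : ℝ)..(r (φ, θ)), ρ ^ 2 * Real.sin θ

/-- The interference-reduction functional
`K(r) = ∫∫_D ∫_0^{r(φ,θ)} P·λ(φ,θ,ρ)·l(ρ)·g(φ,θ)·ρ²·sin θ dρ dθ dφ`. -/
noncomputable def interfK (P : ℝ) (lam : ℝ × ℝ → ℝ → ℝ) (l : ℝ → ℝ) (g : ℝ × ℝ → ℝ)
    (r : ℝ × ℝ → ℝ) : ℝ :=
  ∫ φ in (0 : ℝ)..(2 * Real.pi), ∫ θ in (0 : ℝ)..(Real.pi / 2),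
    ∫ ρ in (0 : ℝ)..(r (φ, θ)), P * lam (φ, θ) ρ * l ρ * g (φ, θ) * ρ ^ 2 * Real.sin θ

/-!
Both functionals have the form `F(r) = ∫_D ∫_0^{r(x)} h(x, ρ) dρ dx`. Averaging `h` over the segment
from `v(x)` to `u(x)` gives a continuous `A` with `F(u) - F(v) = ∫ A(u, v) (u - v)`, so `F` is
strictly differentiable in the sup norm with derivative `η ↦ ∫ h(x, r(x)) η(x) dx`. The Lagrange
multiplier rule and the fundamental lemma of the calculus of variations then yield `(b, c) ≠ 0` with
`(b f(p, r*(p)) + c) r*(p)² sin θ = 0`, where `f` is the interference density. Since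
`r*(p)² sin θ > 0` inside the rectangle, `b = 0` would force `c = 0`; hence `f(p, r*(p)) = -c / b`.
-/

open Filter Topology Set

lemma hasStrictFDerivAt_of_sub_eq_apply_sub {𝕜 E F : Type*} [NontriviallyNormedField 𝕜]
    [SeminormedAddCommGroup E] [NormedSpace 𝕜 E] [SeminormedAddCommGroup F] [NormedSpace 𝕜 F]
    {f : E → F} {A : E × E → E →L[𝕜] F} {x : E} (hA : ContinuousAt A (x, x))
    (hf : ∀ u v, f u - f v = A (u, v) (u - v)) : HasStrictFDerivAt f (A (x, x)) x := by
  rw [hasStrictFDerivAt_iff_isLittleO, Asymptotics.isLittleO_iff]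
  intro ε hε
  filter_upwards [hA (Metric.closedBall_mem_nhds _ hε)] with p hp
  have hAp : ‖A p - A (x, x)‖ ≤ ε := mem_closedBall_iff_norm.mp hp
  calc ‖f p.1 - f p.2 - A (x, x) (p.1 - p.2)‖ = ‖(A p - A (x, x)) (p.1 - p.2)‖ := by
        rw [hf, sub_apply]
    _ ≤ ε * ‖p.1 - p.2‖ := (A p - A (x, x)).le_of_opNorm_le hAp _

section SubgraphIntegral

variable {X : Type*} [TopologicalSpace X]

/-- The average `x ↦ ∫₀¹ h(x, v(x) + t (u(x) - v(x))) dt` of `h` over the segments from `v(x)` to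
`u(x)`: the difference quotient of `u ↦ ∫_0^{u} h`, continuous up to the diagonal `u = v`. -/
noncomputable def segmentAverage (h : C(X × ℝ, ℝ)) (u v : C(X, ℝ)) : C(X, ℝ) where
  toFun x := ∫ t in (0 : ℝ)..1, h (x, v x + (u x - v x) * t)
  continuous_toFun := continuous_parametric_intervalIntegral_of_continuous' (by fun_prop) 0 1

lemma segmentAverage_apply_self (h : C(X × ℝ, ℝ)) (u : C(X, ℝ)) (x : X) :
    segmentAverage h u u x = h (x, u x) := by
  simp [segmentAverage]

lemma segmentAverage_mul_sub (h : C(X × ℝ, ℝ)) (u v : C(X, ℝ)) (x : X) :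
    segmentAverage h u v x * (u x - v x) =
      (∫ ρ in (0 : ℝ)..u x, h (x, ρ)) - ∫ ρ in (0 : ℝ)..v x, h (x, ρ) := by
  have hint (a b : ℝ) : IntervalIntegrable (fun ρ => h (x, ρ)) volume a b :=
    Continuous.intervalIntegrable (by fun_prop) a b
  rw [integral_interval_sub_left (hint _ _) (hint _ _), mul_comm]
  simpa [segmentAverage] using
    smul_integral_comp_add_mul (a := 0) (b := 1) (fun ρ => h (x, ρ)) (u x - v x) (v x)

lemma continuous_segmentAverage [LocallyCompactPair X ℝ] (h : C(X × ℝ, ℝ)) :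
    Continuous fun p : C(X, ℝ) × C(X, ℝ) => segmentAverage h p.1 p.2 :=
  ContinuousMap.continuous_of_continuous_uncurry _ <|
    continuous_parametric_intervalIntegral_of_continuous' (by fun_prop) 0 1

variable [CompactSpace X] [MeasurableSpace X] [BorelSpace X] (μ : Measure X) [IsFiniteMeasure μ]

/-- The pairing `(v, w) ↦ ∫ v w dμ` of continuous functions, as a continuous bilinear map. -/
noncomputable def integralPairing : C(X, ℝ) →L[ℝ] C(X, ℝ) →L[ℝ] ℝ :=
  ContinuousLinearMap.compL ℝ C(X, ℝ) C(X, ℝ) ℝ (L1.integralCLM ∘L ContinuousMap.toLp 1 μ ℝ) ∘L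
    ContinuousLinearMap.mul ℝ C(X, ℝ)

lemma integralPairing_apply (v w : C(X, ℝ)) : integralPairing μ v w = ∫ x, v x * w x ∂μ := by
  change L1.integralCLM (ContinuousMap.toLp 1 μ ℝ (v * w)) = _
  rw [← L1.integral_eq, L1.integral_eq_integral]
  exact integral_congr_ae (ContinuousMap.coeFn_toLp μ (v * w))

variable {μ} in
lemma eq_zero_of_integralPairing_eq_zero [μ.IsOpenPosMeasure] {w : C(X, ℝ)}
    (hw : integralPairing μ w = 0) : w = 0 := by
  by_contra hne
  obtain ⟨x, hx⟩ := DFunLike.ne_iff.mp hne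
  have hpos : 0 < ∫ x, w x * w x ∂μ :=
    Continuous.integral_pos_of_hasCompactSupport_nonneg_nonzero (by fun_prop)
      (HasCompactSupport.of_compactSpace _) (fun x => mul_self_nonneg (w x))
      (mul_self_ne_zero.mpr hx)
  rw [← integralPairing_apply, hw] at hpos
  exact lt_irrefl _ hpos

/-- The integral `∫_X ∫_0^{u(x)} h(x, ρ) dρ dμ(x)` of a density `h` over the region below the graph
of `u`, counted with sign where `u < 0`; as a function of `u` this is the type of functional being
varied. -/
noncomputable def subgraphIntegral (h : C(X × ℝ, ℝ)) (u : C(X, ℝ)) : ℝ :=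
  ∫ x, (∫ ρ in (0 : ℝ)..u x, h (x, ρ)) ∂μ

lemma subgraphIntegral_sub_subgraphIntegral (h : C(X × ℝ, ℝ)) (u v : C(X, ℝ)) :
    subgraphIntegral μ h u - subgraphIntegral μ h v =
      integralPairing μ (segmentAverage h u v) (u - v) := by
  have hint (u : C(X, ℝ)) : Integrable (fun x => ∫ ρ in (0 : ℝ)..u x, h (x, ρ)) μ :=
    Continuous.integrable_of_hasCompactSupport
      (continuous_parametric_intervalIntegral_of_continuous (by fun_prop) u.continuous)
      (HasCompactSupport.of_compactSpace _)
  simp only [subgraphIntegral, integralPairing_apply, ContinuousMap.sub_apply,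
    segmentAverage_mul_sub]
  exact (MeasureTheory.integral_sub (hint u) (hint v)).symm

lemma hasStrictFDerivAt_subgraphIntegral (h : C(X × ℝ, ℝ)) (u : C(X, ℝ)) :
    HasStrictFDerivAt (subgraphIntegral μ h) (integralPairing μ (segmentAverage h u u)) u :=
  hasStrictFDerivAt_of_sub_eq_apply_sub
    (A := fun p => integralPairing μ (segmentAverage h p.1 p.2))
    ((integralPairing μ).continuous.comp (continuous_segmentAverage h)).continuousAt
    (subgraphIntegral_sub_subgraphIntegral μ h)

variable {μ} in
theorem exists_multipliers_of_isLocalExtrOn_subgraphIntegral [μ.IsOpenPosMeasure]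
    {j k : C(X × ℝ, ℝ)} {u : C(X, ℝ)}
    (hext : IsLocalExtrOn (subgraphIntegral μ j)
      {v | subgraphIntegral μ k v = subgraphIntegral μ k u} u) :
    ∃ b c : ℝ, (b, c) ≠ 0 ∧ ∀ x, b * k (x, u x) + c * j (x, u x) = 0 := by
  obtain ⟨b, c, hbc, hmul⟩ := hext.exists_multipliers_of_hasStrictFDerivAt_1d
    (hasStrictFDerivAt_subgraphIntegral μ k u) (hasStrictFDerivAt_subgraphIntegral μ j u)
  have hzero : b • segmentAverage k u u + c • segmentAverage j u u = 0 :=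
    eq_zero_of_integralPairing_eq_zero (μ := μ) (by simpa only [map_add, map_smul] using hmul)
  refine ⟨b, c, hbc, fun x => ?_⟩
  simpa [segmentAverage_apply_self] using DFunLike.congr_fun hzero x

end SubgraphIntegral

lemma isOpenPosMeasure_comap_subtype_val {Y : Type*} [TopologicalSpace Y] [MeasurableSpace Y]
    (μ : Measure Y) [μ.IsOpenPosMeasure] {s : Set Y} (hs : MeasurableSet s)
    (hsub : s ⊆ closure (interior s)) : (μ.comap ((↑) : s → Y)).IsOpenPosMeasure where
  open_pos := by
    rintro _ ⟨V, hV, rfl⟩ ⟨y, hyV⟩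
    have hne : (V ∩ interior s).Nonempty := mem_closure_iff.mp (hsub y.2) V hV hyV
    rw [comap_subtype_coe_apply hs, Subtype.image_preimage_coe, inter_comm]
    exact mt (measure_mono_null (inter_subset_inter_right V interior_subset))
      ((hV.inter isOpen_interior).measure_ne_zero μ hne)

attribute [local instance] Measure.Subtype.measureSpace

lemma intervalIntegral_intervalIntegral_eq_integral_subtype {E : Type*} [NormedAddCommGroup E]
    [NormedSpace ℝ E] {a b c d : ℝ} (hab : a ≤ b) (hcd : c ≤ d) {f : ℝ × ℝ → E}
    (hf : ContinuousOn f (Icc a b ×ˢ Icc c d)) :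
    ∫ x in a..b, ∫ y in c..d, f (x, y) = ∫ p : ↥(Icc a b ×ˢ Icc c d), f p := by
  have hint : IntegrableOn f (Icc a b ×ˢ Icc c d) (volume.prod volume) :=
    hf.integrableOn_compact (isCompact_Icc.prod isCompact_Icc)
  rw [Measure.Subtype.volume_def,
    integral_subtype_comap (measurableSet_Icc.prod measurableSet_Icc), Measure.volume_eq_prod,
    setIntegral_prod _ hint]
  simp only [integral_of_le hab, integral_of_le hcd, integral_Icc_eq_integral_Ioc]

section NoFlyZone

lemma isCompact_nfzDomain : IsCompact NFZDomain := isCompact_Icc.prod isCompact_Icc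

instance : CompactSpace NFZDomain := isCompact_iff_compactSpace.mp isCompact_nfzDomain

instance : IsFiniteMeasure (volume : Measure NFZDomain) where
  measure_univ_lt_top := by
    rw [Measure.Subtype.volume_univ isCompact_nfzDomain.measurableSet.nullMeasurableSet]
    exact isCompact_nfzDomain.measure_lt_top

instance : (volume : Measure NFZDomain).IsOpenPosMeasure :=
  isOpenPosMeasure_comap_subtype_val volume isCompact_nfzDomain.measurableSet <| by
    rw [NFZDomain, interior_prod_eq, interior_Icc, interior_Icc, closure_prod_eq,
      closure_Ioo (by positivity), closure_Ioo (by positivity)]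

/-- The integral of a density `f` over the no-fly zone determined by `r`, in spherical coordinates.
The density `1` gives `volJ`, and `P · λ · l · g` gives `interfK`. -/
noncomputable def weightedVolume (f : ℝ × ℝ → ℝ → ℝ) (r : ℝ × ℝ → ℝ) : ℝ :=
  ∫ φ in (0 : ℝ)..(2 * π), ∫ θ in (0 : ℝ)..(π / 2), ∫ ρ in (0 : ℝ)..r (φ, θ),
    f (φ, θ) ρ * ρ ^ 2 * sin θ

lemma volJ_eq_weightedVolume : volJ = weightedVolume fun _ _ => 1 := by
  simp only [funext_iff, volJ, weightedVolume, one_mul, implies_true]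

/-- The density `f(p, ρ) ρ² sin θ` of `weightedVolume f` with respect to `dρ dp`, continued to
`ρ < 0` by freezing `f` at `ρ = 0`, so that it is continuous on all of `NFZDomain × ℝ`. -/
noncomputable def sphericalDensity {f : ℝ × ℝ → ℝ → ℝ}
    (hf : ContinuousOn (fun q : (ℝ × ℝ) × ℝ => f q.1 q.2) (NFZDomain ×ˢ Ici 0)) :
    C(NFZDomain × ℝ, ℝ) where
  toFun q := f q.1 (max q.2 0) * q.2 ^ 2 * sin q.1.1.2
  continuous_toFun := by
    have hmem (q : NFZDomain × ℝ) : ((q.1 : ℝ × ℝ), max q.2 0) ∈ NFZDomain ×ˢ Ici (0 : ℝ) :=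
      ⟨q.1.2, mem_Ici.mpr (le_max_right _ _)⟩
    have hcont : Continuous fun q : NFZDomain × ℝ => f q.1 (max q.2 0) :=
      hf.comp_continuous (by fun_prop) hmem
    exact (hcont.mul (by fun_prop)).mul (by fun_prop)

variable {f : ℝ × ℝ → ℝ → ℝ} {r : ℝ × ℝ → ℝ}
  (hf : ContinuousOn (fun q : (ℝ × ℝ) × ℝ => f q.1 q.2) (NFZDomain ×ˢ Ici 0))

lemma sphericalDensity_apply (p : NFZDomain) {ρ : ℝ} (hρ : 0 ≤ ρ) :
    sphericalDensity hf (p, ρ) = f p ρ * ρ ^ 2 * sin p.1.2 := by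
  simp [sphericalDensity, max_eq_left hρ]

lemma weightedVolume_eq_subgraphIntegral {u : C(NFZDomain, ℝ)} (hru : ∀ p : NFZDomain, r p = u p)
    (hu : ∀ p, 0 ≤ u p) :
    weightedVolume f r = subgraphIntegral volume (sphericalDensity hf) u := by
  have hinner (p : NFZDomain) : ∫ ρ in (0 : ℝ)..r p, f p ρ * ρ ^ 2 * sin p.1.2 =
      ∫ ρ in (0 : ℝ)..u p, sphericalDensity hf (p, ρ) := by
    rw [hru]
    refine integral_congr fun ρ hρ => (sphericalDensity_apply hf p ?_).symm
    exact (uIcc_of_le (hu p) ▸ hρ).1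
  have hcont : ContinuousOn
      (fun p : ℝ × ℝ => ∫ ρ in (0 : ℝ)..r p, f p ρ * ρ ^ 2 * sin p.2) NFZDomain := by
    rw [continuousOn_iff_continuous_domRestrict]
    exact (continuous_parametric_intervalIntegral_of_continuous (by fun_prop)
      u.continuous).congr fun p => (hinner p).symm
  exact (intervalIntegral_intervalIntegral_eq_integral_subtype two_pi_pos.le pi_div_two_pos.le
    hcont).trans (integral_congr_ae (.of_forall hinner))

lemma isLocalMinOn_subgraphIntegral {f₀ : ℝ × ℝ → ℝ → ℝ}
    (hf₀ : ContinuousOn (fun q : (ℝ × ℝ) × ℝ => f₀ q.1 q.2) (NFZDomain ×ˢ Ici 0))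
    {u : C(NFZDomain, ℝ)} (hru : ∀ p : NFZDomain, r p = u p) (hu : ∀ p, 0 < u p)
    (hmin : ∃ ε > (0 : ℝ), ∀ s : ℝ × ℝ → ℝ, ContinuousOn s NFZDomain →
      (∀ p ∈ NFZDomain, 0 < s p) → (∀ p ∈ NFZDomain, |s p - r p| ≤ ε) →
      weightedVolume f s = weightedVolume f r → weightedVolume f₀ r ≤ weightedVolume f₀ s) :
    IsLocalMinOn (subgraphIntegral volume (sphericalDensity hf₀))
      {v | subgraphIntegral volume (sphericalDensity hf) v =
        subgraphIntegral volume (sphericalDensity hf) u} u := by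
  obtain ⟨ε, hε, hmin⟩ := hmin
  have hpos : ∀ᶠ v : C(NFZDomain, ℝ) in 𝓝 u, MapsTo v univ (Ioi 0) :=
    ContinuousMap.eventually_mapsTo isCompact_univ isOpen_Ioi fun p _ => hu p
  have hclose : ∀ᶠ v : C(NFZDomain, ℝ) in 𝓝 u, dist v u ≤ ε := Metric.closedBall_mem_nhds u hε
  filter_upwards [nhdsWithin_le_nhds hpos, nhdsWithin_le_nhds hclose, self_mem_nhdsWithin]
    with v hv hvu hconstr
  obtain ⟨s, rfl⟩ := ContinuousMap.exists_restrict_eq isCompact_nfzDomain.isClosed v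
  have hs (p : NFZDomain) : 0 < s p := hv (mem_univ p)
  have hr_repr {f' : ℝ × ℝ → ℝ → ℝ} (hf' : ContinuousOn (fun q : (ℝ × ℝ) × ℝ => f' q.1 q.2)
      (NFZDomain ×ˢ Ici 0)) : weightedVolume f' r =
        subgraphIntegral volume (sphericalDensity hf') u :=
    weightedVolume_eq_subgraphIntegral hf' hru fun p => (hu p).le
  have hs_repr {f' : ℝ × ℝ → ℝ → ℝ} (hf' : ContinuousOn (fun q : (ℝ × ℝ) × ℝ => f' q.1 q.2)
      (NFZDomain ×ˢ Ici 0)) : weightedVolume f' s =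
        subgraphIntegral volume (sphericalDensity hf') (s.restrict NFZDomain) :=
    weightedVolume_eq_subgraphIntegral hf' (fun _ => rfl) fun p => (hs p).le
  rw [← hr_repr, ← hs_repr]
  refine hmin s s.continuous.continuousOn (fun p hp => hs ⟨p, hp⟩) (fun p hp => ?_) ?_
  · rw [hru ⟨p, hp⟩]
    exact (ContinuousMap.dist_apply_le_dist ⟨p, hp⟩).trans hvu
  · rw [hr_repr hf, hs_repr hf]
    exact hconstr

end NoFlyZone

theorem minimum_volume_no_fly_zone_euler_lagrange_general
    {f : ℝ × ℝ → ℝ → ℝ}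
    (hf : ContinuousOn (fun q : (ℝ × ℝ) × ℝ => f q.1 q.2) (NFZDomain ×ˢ Ici 0))
    {r : ℝ × ℝ → ℝ}
    (hr : ContinuousOn r NFZDomain) (hr_pos : ∀ p ∈ NFZDomain, 0 < r p)
    (hmin : ∃ ε > (0 : ℝ), ∀ s : ℝ × ℝ → ℝ, ContinuousOn s NFZDomain →
      (∀ p ∈ NFZDomain, 0 < s p) → (∀ p ∈ NFZDomain, |s p - r p| ≤ ε) →
      weightedVolume f s = weightedVolume f r → volJ r ≤ volJ s) :
    ∃ m : ℝ, ∀ p ∈ Ioo (0 : ℝ) (2 * π) ×ˢ Ioo (0 : ℝ) (π / 2), f p (r p) = m := by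
  have hpos (p : NFZDomain) : 0 < r p := hr_pos p p.2
  rw [volJ_eq_weightedVolume] at hmin
  obtain ⟨b, c, hbc, hmul⟩ := exists_multipliers_of_isLocalExtrOn_subgraphIntegral <| Or.inl <|
    isLocalMinOn_subgraphIntegral hf (f₀ := fun _ _ => 1) continuousOn_const
      (u := ⟨NFZDomain.domRestrict r, hr.domRestrict⟩) (fun _ => rfl) hpos hmin
  have hmul_interior : ∀ p ∈ Ioo (0 : ℝ) (2 * π) ×ˢ Ioo (0 : ℝ) (π / 2),
      b * f p (r p) + c = 0 := by
    intro p hp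
    have hpD : p ∈ NFZDomain := prod_mono Ioo_subset_Icc_self Ioo_subset_Icc_self hp
    have hsin : 0 < sin p.2 := sin_pos_of_mem_Ioo ⟨hp.2.1, hp.2.2.trans (half_lt_self pi_pos)⟩
    have hweight : r p ^ 2 * sin p.2 ≠ 0 := by have := hr_pos p hpD; positivity
    have h := hmul ⟨p, hpD⟩
    simp only [ContinuousMap.coe_mk, domRestrict_apply] at h
    rw [sphericalDensity_apply _ _ (hr_pos p hpD).le,
      sphericalDensity_apply _ _ (hr_pos p hpD).le] at h
    exact mul_right_cancel₀ hweight (by linear_combination h)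
  refine ⟨-c / b, fun p hp => ?_⟩
  have hb : b ≠ 0 := by
    rintro rfl
    exact hbc (by simpa using hmul_interior p hp)
  rw [eq_div_iff hb]
  linear_combination hmul_interior p hp

/-- Euler–Lagrange condition for the minimum-volume no-fly zone:
if `r*` is a continuous positive local minimizer (w.r.t. the sup norm) of the volume `J`
subject to the interference-reduction constraint `K(r) = a`, and the first variation of `K`
at `r*` is nondegenerate (witnessed by a smooth test function `η₀` compactly supported in
the open rectangle), then there is a Lagrange multiplier `μ ∈ ℝ` such that
`P·λ(φ,θ,r*(φ,θ))·l(r*(φ,θ))·g(φ,θ) = μ` on the open rectangle `(0,2π) × (0,π/2)`. -/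
theorem minimum_volume_no_fly_zone_euler_lagrange
    (lam : ℝ × ℝ → ℝ → ℝ)
    (hlam_cont : ContinuousOn (fun q : (ℝ × ℝ) × ℝ => lam q.1 q.2)
      (NFZDomain ×ˢ Set.Ici (0 : ℝ)))
    (hlam_nonneg : ∀ p ∈ NFZDomain, ∀ ρ ≥ (0 : ℝ), 0 ≤ lam p ρ)
    (l : ℝ → ℝ) (hl_cont : ContinuousOn l (Set.Ici (0 : ℝ)))
    (hl_nonneg : ∀ ρ ≥ (0 : ℝ), 0 ≤ l ρ)
    (g : ℝ × ℝ → ℝ) (hg_cont : ContinuousOn g NFZDomain)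
    (hg_nonneg : ∀ p ∈ NFZDomain, 0 ≤ g p)
    (P : ℝ) (hP : 0 < P) (a : ℝ)
    (rstar : ℝ × ℝ → ℝ) (hrstar_cont : ContinuousOn rstar NFZDomain)
    (hrstar_pos : ∀ p ∈ NFZDomain, 0 < rstar p)
    (hKa : interfK P lam l g rstar = a)
    -- `r*` is a local minimizer of `J` (w.r.t. the sup norm) among continuous positive
    -- functions satisfying the constraint `K(r) = a`:
    (hmin : ∃ ε > (0 : ℝ), ∀ r : ℝ × ℝ → ℝ, ContinuousOn r NFZDomain →
      (∀ p ∈ NFZDomain, 0 < r p) → (∀ p ∈ NFZDomain, |r p - rstar p| ≤ ε) →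
      interfK P lam l g r = a → volJ rstar ≤ volJ r)
    -- nondegeneracy: the first variation of `K` at `r*` is not identically zero:
    (η₀ : ℝ × ℝ → ℝ) (hη₀_smooth : ContDiff ℝ (⊤ : ℕ∞) η₀)
    (hη₀_supp : HasCompactSupport η₀)
    (hη₀_supp' : tsupport η₀ ⊆ Set.Ioo (0 : ℝ) (2 * Real.pi) ×ˢ Set.Ioo (0 : ℝ) (Real.pi / 2))
    (hη₀_ne : (∫ φ in (0 : ℝ)..(2 * Real.pi), ∫ θ in (0 : ℝ)..(Real.pi / 2),
      P * lam (φ, θ) (rstar (φ, θ)) * l (rstar (φ, θ)) * g (φ, θ) * rstar (φ, θ) ^ 2 *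
        Real.sin θ * η₀ (φ, θ)) ≠ 0) :
    ∃ μ : ℝ, ∀ p ∈ Set.Ioo (0 : ℝ) (2 * Real.pi) ×ˢ Set.Ioo (0 : ℝ) (Real.pi / 2),
      P * lam p (rstar p) * l (rstar p) * g p = μ := by
  subst hKa
  exact minimum_volume_no_fly_zone_euler_lagrange_general (f := fun p ρ => P * lam p ρ * l ρ * g p)
    (((continuousOn_const.mul hlam_cont).mul (hl_cont.comp continuousOn_snd fun _ hq => hq.2)).mul
      (hg_cont.comp continuousOn_fst fun _ hq => hq.1)) hrstar_cont hrstar_pos hmin
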